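/- arXiv:2001.09081 — 3 statements merged into one kernel-verified Lean document; each statement's English description precedes it below -/
import Mathlib

section
/- Let a = (1/4)·√((19 − 3√33)/2) (so that a² = (19 − 3√33)/32 is the smaller root of 16x² − 19x + 1 = 0). Then a/√(a² + 1) = (1 − 8a²)/(8a² + 2). Equivalently, at this parameter value the largest angle candidates of the two midpoint-triangle families coincide: arccos(a/√(a² + 1)) = arccos((1 − 8a²)/(8a² + 2)). -/
/-!
With `x = a²`, squaring `a/√(x + 1) = (1 − 8x)/(8x + 2)` and clearing denominators gives
`x(8x + 2)² = (1 − 8x)²(x + 1)`, whose difference of sides is `-(16x² − 19x + 1) = 0`. Both sides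
of the unsquared equation are nonnegative because `5 ≤ √33` forces `x ≤ 1/8`, so the squared
identity suffices.
-/

/-- Let `a = (1/4)·√((19 − 3√33)/2)`, so `a² = (19 − 3√33)/32` is the smaller root of
`16x² − 19x + 1 = 0`. Then `a/√(a² + 1) = (1 − 8a²)/(8a² + 2)`; equivalently, the two
largest-angle candidates coincide: `arccos (a/√(a² + 1)) = arccos ((1 − 8a²)/(8a² + 2))`. -/
theorem a1_angle_coincidence :
    let a : ℝ := (1/4) * Real.sqrt ((19 - 3 * Real.sqrt 33) / 2)
    a^2 = (19 - 3 * Real.sqrt 33) / 32 ∧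
    16 * (a^2)^2 - 19 * a^2 + 1 = 0 ∧
    a / Real.sqrt (a^2 + 1) = (1 - 8*a^2) / (8*a^2 + 2) ∧
    Real.arccos (a / Real.sqrt (a^2 + 1)) = Real.arccos ((1 - 8*a^2) / (8*a^2 + 2)) := by
  intro a
  have h33 : Real.sqrt 33 ^ 2 = 33 := Real.sq_sqrt (by norm_num)
  have hlo : 5 ≤ Real.sqrt 33 := Real.le_sqrt_of_sq_le (by norm_num)
  have hhi : Real.sqrt 33 ≤ 6 := Real.sqrt_le_iff.mpr ⟨by norm_num, by norm_num⟩
  have ha0 : 0 ≤ a := by positivity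
  have hsq : a^2 = (19 - 3 * Real.sqrt 33) / 32 := by
    simp only [a]
    rw [mul_pow, Real.sq_sqrt (by linarith)]
    ring
  have hroot : 16 * (a^2)^2 - 19 * a^2 + 1 = 0 := by
    rw [hsq]
    linear_combination (9 / 64) * h33
  have hle : a^2 ≤ 1 / 8 := by linarith
  clear_value a
  have hmain : a / Real.sqrt (a^2 + 1) = (1 - 8*a^2) / (8*a^2 + 2) := by
    have hs : 0 < Real.sqrt (a^2 + 1) := Real.sqrt_pos.mpr (by positivity)
    have hs2 : Real.sqrt (a^2 + 1) ^ 2 = a^2 + 1 := Real.sq_sqrt (by positivity)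
    rw [div_eq_div_iff hs.ne' (by positivity)]
    refine (sq_eq_sq₀ (by positivity) (mul_nonneg (by linarith) hs.le)).mp ?_
    rw [mul_pow, mul_pow, hs2]
    linear_combination -hroot
  exact ⟨hsq, hroot, hmain, congrArg Real.arccos hmain⟩
end

section
/- Fix real numbers v₁ > 0 and w₁ ≠ 0, and define g : ℝ → ℝ by g(θ) = (v₁·w₁ + cos²θ)/(√(v₁² + cos²θ)·√(w₁² + cos²θ)). Then for every θ, g has derivative at θ equal to sin θ · cos θ · (v₁ − w₁)² · (v₁·w₁ − cos²θ) / ((v₁² + cos²θ)^{3/2} · (w₁² + cos²θ)^{3/2}). (When w = (w₁, 1), g(θ) is the cosine of the angle between the projected vectors (v₁, cos θ) and (w₁, cos θ).) -/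
/-!
Put `u = cos²θ`, `a = √(v₁² + u)` and `b = √(w₁² + u)`; both roots are positive because
`v₁` and `w₁` are nonzero. The quotient rule writes the derivative over `a³b³`, and the
numerator simplifies through
`2(v₁² + u)(w₁² + u) - (v₁w₁ + u)(v₁² + w₁² + 2u) = -(v₁ - w₁)²(v₁w₁ - u)`.
-/

lemma rpow_three_halves {x : ℝ} (hx : 0 ≤ x) : x ^ ((3:ℝ)/2) = Real.sqrt x ^ 3 := by
  rw [Real.sqrt_eq_rpow, ← Real.rpow_natCast, ← Real.rpow_mul hx]
  norm_num

/-- For `v₁ > 0` and `w₁ ≠ 0`, the function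
`g(θ) = (v₁w₁ + cos²θ)/(√(v₁² + cos²θ)·√(w₁² + cos²θ))` has derivative
`sin θ · cos θ · (v₁ − w₁)² · (v₁w₁ − cos²θ) / ((v₁² + cos²θ)^(3/2) · (w₁² + cos²θ)^(3/2))`
at every `θ`. -/
theorem cos_projAngle_hasDerivAt (v₁ w₁ : ℝ) (hv₁ : 0 < v₁) (hw₁ : w₁ ≠ 0) (θ : ℝ) :
    HasDerivAt
      (fun θ : ℝ => (v₁ * w₁ + Real.cos θ ^ 2) /
        (Real.sqrt (v₁^2 + Real.cos θ ^ 2) * Real.sqrt (w₁^2 + Real.cos θ ^ 2)))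
      (Real.sin θ * Real.cos θ * (v₁ - w₁)^2 * (v₁ * w₁ - Real.cos θ ^ 2) /
        ((v₁^2 + Real.cos θ ^ 2) ^ ((3:ℝ)/2) * (w₁^2 + Real.cos θ ^ 2) ^ ((3:ℝ)/2))) θ := by
  have hA : 0 < v₁^2 + Real.cos θ ^ 2 := by positivity
  have hB : 0 < w₁^2 + Real.cos θ ^ 2 := by positivity
  have hc : HasDerivAt (fun θ : ℝ => Real.cos θ ^ 2) (-(2 * Real.cos θ * Real.sin θ)) θ := by
    refine ((Real.hasDerivAt_cos θ).pow 2).congr_deriv ?_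
    norm_num
  have ha := (hc.const_add (v₁^2)).sqrt hA.ne'
  have hb := (hc.const_add (w₁^2)).sqrt hB.ne'
  have ha0 := Real.sqrt_pos.2 hA
  have hb0 := Real.sqrt_pos.2 hB
  have hg := (hc.const_add (v₁ * w₁)).div (ha.mul hb) (mul_pos ha0 hb0).ne'
  refine hg.congr_deriv ?_
  rw [rpow_three_halves hA.le, rpow_three_halves hB.le]
  have ea := Real.sq_sqrt hA.le
  have eb := Real.sq_sqrt hB.le
  simp only [Pi.mul_apply]
  generalize Real.sqrt (v₁^2 + Real.cos θ ^ 2) = a at *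
  generalize Real.sqrt (w₁^2 + Real.cos θ ^ 2) = b at *
  -- With `a² = v₁² + cos²θ` and `b² = w₁² + cos²θ`, the quotient rule gives this numerator
  -- over `a³b³`.
  have key : -(2 * Real.cos θ * Real.sin θ) * (a^2 * b^2)
      + (v₁ * w₁ + Real.cos θ ^ 2) * (Real.cos θ * Real.sin θ) * (a^2 + b^2)
      = Real.sin θ * Real.cos θ * (v₁ - w₁)^2 * (v₁ * w₁ - Real.cos θ ^ 2) := by
    rw [ea, eb]
    ring
  rw [← key]
  field_simp
  ring
end

section
/- Define D(a) = √((a² + 1)·(172a⁴ + (59 − 36√(12a² + 3))·a² + 4)/(4a² + 1)) for a > 0. Then at a = √2/4 one has 4a² + 1 = 2 − 4a² = 3/2, D(a)² = 9·(75 − 36√2)/64, and consequently (4a² + 1)/D(a) = (2 − 4a²)/D(a) = 4/√(75 − 36√2). Moreover, 35.41·π/180 < arccos(4/√(75 − 36√2)) < 35.42·π/180. -/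
/-!
The algebraic identities follow from `a² = 1/8`: the nested root is `√(9/2) = 3√2/2`, so that
`D(a) = (3/8) √(75 - 36√2)`.

For the numerical bounds, put `c = 4/√(75 - 36√2) ≈ 0.8149985`. Since `arccos` is the decreasing
inverse of `cos` on `[0, π]`, it suffices to show `cos 35.42° < c < cos 35.41°`. Both angles are
slightly less than `36° = π/5`, whose cosine is `(1 + √5)/4`, so `cos (π/5 - δ)` is expanded by the
subtraction formula and the crude bounds `1 - δ²/2 ≤ cos δ ≤ 1` and `δ - δ³/6 < sin δ < δ`
already give enough precision, `δ` being about `0.01`.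
-/

lemma sqrt_two_bounds : 1.41421356 < √(2:ℝ) ∧ √(2:ℝ) < 1.41421357 :=
  ⟨Real.lt_sqrt_of_sq_lt (by norm_num), (Real.sqrt_lt' (by norm_num)).2 (by norm_num)⟩

lemma cos_pi_div_five_bounds :
    0.8090169 < Real.cos (Real.pi / 5) ∧ Real.cos (Real.pi / 5) < 0.809017 := by
  have h₁ : 2.2360679 < √(5:ℝ) := Real.lt_sqrt_of_sq_lt (by norm_num)
  have h₂ : √(5:ℝ) < 2.236068 := (Real.sqrt_lt' (by norm_num)).2 (by norm_num)
  rw [Real.cos_pi_div_five]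
  constructor <;> linarith

lemma sin_pi_div_five_bounds :
    0.587785 < Real.sin (Real.pi / 5) ∧ Real.sin (Real.pi / 5) < 0.587786 := by
  obtain ⟨h₁, h₂⟩ := cos_pi_div_five_bounds
  have hs : 0 < Real.sin (Real.pi / 5) :=
    Real.sin_pos_of_pos_of_lt_pi (by positivity) (by linarith [Real.pi_pos])
  have h := Real.sin_sq_add_cos_sq (Real.pi / 5)
  constructor <;> nlinarith

lemma cosine_value_bounds :
    0.814998 < 4 / √(75 - 36 * √(2:ℝ)) ∧ 4 / √(75 - 36 * √(2:ℝ)) < 0.814999 := by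
  obtain ⟨h₁, h₂⟩ := sqrt_two_bounds
  have l : 4.907984 < √(75 - 36 * √(2:ℝ)) := Real.lt_sqrt_of_sq_lt (by norm_num at *; linarith)
  have u : √(75 - 36 * √(2:ℝ)) < 4.907987 :=
    (Real.sqrt_lt' (by norm_num)).2 (by norm_num at *; linarith)
  have p : 0 < √(75 - 36 * √(2:ℝ)) := by linarith
  rw [lt_div_iff₀ p, div_lt_iff₀ p]
  constructor <;> linarith

lemma cos_lower : 0.814999 < Real.cos (35.41 * Real.pi / 180) := by
  obtain ⟨c₁, c₂⟩ := cos_pi_div_five_bounds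
  obtain ⟨s₁, s₂⟩ := sin_pi_div_five_bounds
  have p₁ := Real.pi_gt_d6
  have p₂ := Real.pi_lt_d6
  rw [show 35.41 * Real.pi / 180 = Real.pi / 5 - 0.59 * Real.pi / 180 by ring, Real.cos_sub]
  set d := 0.59 * Real.pi / 180 with hd
  have d₁ : 0.010297 < d := by rw [hd]; linarith
  have d₂ : d < 0.010298 := by rw [hd]; linarith
  have hc : 0.999946 < Real.cos d := by nlinarith [Real.one_sub_sq_div_two_le_cos (x := d)]
  have hcube : d ^ 3 ≤ 0.010298 ^ 3 := by gcongr
  have hs : 0.010296 < Real.sin d := by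
    have := Real.sin_gt_sub_cube (x := d) (by linarith)
    norm_num at *
    linarith
  nlinarith [mul_lt_mul'' c₁ hc (by norm_num) (by norm_num),
    mul_lt_mul'' s₁ hs (by norm_num) (by norm_num)]

lemma cos_upper : Real.cos (35.42 * Real.pi / 180) < 0.814998 := by
  obtain ⟨c₁, c₂⟩ := cos_pi_div_five_bounds
  obtain ⟨s₁, s₂⟩ := sin_pi_div_five_bounds
  have p₁ := Real.pi_gt_d6
  have p₂ := Real.pi_lt_d6
  rw [show 35.42 * Real.pi / 180 = Real.pi / 5 - 0.58 * Real.pi / 180 by ring, Real.cos_sub]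
  set d := 0.58 * Real.pi / 180 with hd
  have d₁ : 0 < d := by positivity
  have d₂ : d < 0.010123 := by rw [hd]; linarith
  have hc := Real.cos_le_one d
  have hs : Real.sin d < 0.010123 := (Real.sin_lt d₁).trans d₂
  have h₁ : Real.cos (Real.pi / 5) * Real.cos d ≤ Real.cos (Real.pi / 5) * 1 := by gcongr
  have h₂ : Real.sin (Real.pi / 5) * Real.sin d ≤ Real.sin (Real.pi / 5) * 0.010123 := by
    gcongr
  linarith


/-- At `a = √2/4`, with `D(a) = √((a² + 1)(172a⁴ + (59 − 36√(12a² + 3))a² + 4)/(4a² + 1))`,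
one has `4a² + 1 = 2 − 4a² = 3/2`, `D(a)² = 9(75 − 36√2)/64`, hence the two projected-angle
cosines `(4a² + 1)/D(a)` and `(2 − 4a²)/D(a)` both equal `4/√(75 − 36√2)`, and
`arccos (4/√(75 − 36√2))` lies strictly between `35.41°` and `35.42°`. -/
theorem projected_angle_at_a0 :
    let D : ℝ → ℝ := fun a =>
      Real.sqrt ((a^2 + 1) * (172*a^4 + (59 - 36 * Real.sqrt (12*a^2 + 3)) * a^2 + 4)
        / (4*a^2 + 1))
    let a : ℝ := Real.sqrt 2 / 4
    4*a^2 + 1 = 3/2 ∧ 2 - 4*a^2 = 3/2 ∧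
    (D a)^2 = 9 * (75 - 36 * Real.sqrt 2) / 64 ∧
    (4*a^2 + 1) / D a = 4 / Real.sqrt (75 - 36 * Real.sqrt 2) ∧
    (2 - 4*a^2) / D a = 4 / Real.sqrt (75 - 36 * Real.sqrt 2) ∧
    35.41 * Real.pi / 180 < Real.arccos (4 / Real.sqrt (75 - 36 * Real.sqrt 2)) ∧
    Real.arccos (4 / Real.sqrt (75 - 36 * Real.sqrt 2)) < 35.42 * Real.pi / 180 := by
  intro D a
  have ha : a ^ 2 = 1 / 8 := by
    simp only [a, div_pow, Real.sq_sqrt (show (0:ℝ) ≤ 2 by norm_num)]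
    norm_num
  have hs2 : √(2:ℝ) ^ 2 = 2 := Real.sq_sqrt (by norm_num)
  have hr : √(12 * a ^ 2 + 3) = 3 * √2 / 2 := by
    rw [Real.sqrt_eq_iff_mul_self_eq (by positivity) (by positivity), ha]
    linarith
  have hpos : 0 < 75 - 36 * √(2:ℝ) := by linarith [sqrt_two_bounds.2]
  have hsq : √(75 - 36 * √(2:ℝ)) ^ 2 = 75 - 36 * √2 := Real.sq_sqrt hpos.le
  have hD : D a = 3 / 8 * √(75 - 36 * √2) := by
    simp only [D]
    rw [hr, show a ^ 4 = (a ^ 2) ^ 2 by ring, ha, Real.sqrt_eq_iff_mul_self_eq_of_pos (by positivity)]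
    linear_combination (9 / 64) * hsq
  have h₁ : 4 * a ^ 2 + 1 = 3 / 2 := by rw [ha]; norm_num
  have h₂ : 2 - 4 * a ^ 2 = 3 / 2 := by rw [ha]; norm_num
  have hq : (3 / 2) / D a = 4 / √(75 - 36 * √2) := by
    have := Real.sqrt_pos.2 hpos
    rw [hD]
    field_simp
    norm_num
  obtain ⟨l, u⟩ := cosine_value_bounds
  refine ⟨h₁, h₂, ?_, by rw [h₁, hq], by rw [h₂, hq], ?_, ?_⟩
  · rw [hD, mul_pow, hsq]
    ring
  · rw [← Real.arccos_cos (x := 35.41 * Real.pi / 180) (by positivity) (by linarith [Real.pi_pos])]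
    exact Real.arccos_lt_arccos (by linarith) (u.trans cos_lower) (Real.cos_le_one _)
  · rw [← Real.arccos_cos (x := 35.42 * Real.pi / 180) (by positivity) (by linarith [Real.pi_pos])]
    exact Real.arccos_lt_arccos (Real.neg_one_le_cos _) (cos_upper.trans l) (by linarith)
end
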